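/- arXiv:1206.0489 — 2 statements merged into one kernel-verified Lean document; each statement's English description precedes it below -/
import Mathlib

section
/- Suppose X, Y are independent real-valued continuous random variables, let Z = X - Y, let (X1,Y1) and (X2,Y2) be two conditionally independent versions of (X,Y) given Z (i.e., each pair has the same joint distribution as (X,Y), each satisfies Xi - Yi = Z, and the two pairs are conditionally independent given Z), and let (X3,Y3) have the same distribution as (X,Y) and be independent of (X1,Y1,X2,Y2). If all relevant differential entropies exist and are finite, then h(X3+Y3) + h(X1) + h(Y2) ≤ h(X3-Y2) + h(X1-Y3) + h(Z). -/
open MeasureTheory ProbabilityTheory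

/-- The differential entropy of a random variable `X` (with respect to a reference
measure `μ` on the value space, typically Lebesgue measure): if `f` is the density of
the law of `X` with respect to `μ`, then `h(X) = -E[log f(X)]`. -/
noncomputable def dent {Ω E : Type*} [MeasurableSpace Ω] [MeasurableSpace E]
    (μ : Measure E) (P : Measure Ω) (X : Ω → E) : ℝ :=
  -∫ x, Real.log (((P.map X).rnDeriv μ x).toReal) ∂(P.map X)

/-- `X` is a continuous random variable (its law is absolutely continuous with respect
to the reference measure `μ`, i.e. it has a density `f`), and its differential entropy
exists and is finite (the log-density is integrable under the law of `X`). -/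
def FiniteDent {Ω E : Type*} [MeasurableSpace Ω] [MeasurableSpace E]
    (μ : Measure E) (P : Measure Ω) (X : Ω → E) : Prop :=
  P.map X ≪ μ ∧
    Integrable (fun x => Real.log (((P.map X).rnDeriv μ x).toReal)) (P.map X)

/-!
Writing `p_W` for the density of `W`, the random variable
`R = p_Z(Z) p_{X₃-Y₂}(X₃-Y₂) p_{X₁-Y₃}(X₁-Y₃) / (p_{X₃+Y₃}(X₃+Y₃) p_{X₁}(X₁) p_{Y₂}(Y₂))`
has `E[log R]` equal to the left-hand side of the inequality minus the right-hand side, so by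
`log R ≤ R - 1` it is enough that `E[R] ≤ 1`.

Each factor of `R` cancels a density. Given `Z`, weighting by `p_Z(Z) / p_{X₁}(X₁)` decouples `Y₁`
from `(Z, Y₂)`, and hence from `(X₂, Y₂)`; weighting by `1 / p_{Y₂}(Y₂)` then replaces `Y₂` by the
reference measure. Since `X₁ - Y₃ = (Y₁ + X₂ - Y₂) - Y₃`, integrating `Y₂` out for fixed
`(X₃, Y₃)` leaves a convolution of the two remaining densities, which depends on `(X₃, Y₃)` only
through `X₃ + Y₃`. Weighting by `1 / p_{X₃+Y₃}(X₃+Y₃)` replaces the law of this sum by the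
reference measure too, and the convolution integrates to one.
-/

open Measure
open scoped ENNReal

section Expectation

variable {Ω α β γ : Type*} [MeasurableSpace Ω] [MeasurableSpace α] [MeasurableSpace β]
  [MeasurableSpace γ] {P : Measure Ω} [IsFiniteMeasure P]

lemma lintegral_eq_lintegral_lintegral_of_indepFun {U : Ω → α} {V : Ω → β} (hU : Measurable U)
    (hV : Measurable V) (hUV : U ⟂ᵢ[P] V) {Φ : α × β → ℝ≥0∞} (hΦ : Measurable Φ) :
    ∫⁻ ω, Φ (U ω, V ω) ∂P = ∫⁻ ω, ∫⁻ ω', Φ (U ω, V ω') ∂P ∂P := by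
  rw [← lintegral_map hΦ (hU.prodMk hV),
    (indepFun_iff_map_prod_eq_prod_map_map hU.aemeasurable hV.aemeasurable).1 hUV,
    lintegral_prod _ hΦ.aemeasurable, lintegral_map hΦ.lintegral_prod_right' hU]
  exact lintegral_congr fun ω => lintegral_map (hΦ.comp measurable_prodMk_left) hV

lemma lintegral_lintegral_condDistrib [StandardBorelSpace β] [Nonempty β] {V : Ω → β} {Z : Ω → γ}
    (hV : Measurable V) (hZ : Measurable Z) {Φ : γ × β → ℝ≥0∞} (hΦ : Measurable Φ) :
    ∫⁻ ω, ∫⁻ v, Φ (Z ω, v) ∂condDistrib V Z P (Z ω) ∂P = ∫⁻ ω, Φ (Z ω, V ω) ∂P := by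
  rw [← lintegral_map hΦ (hZ.prodMk hV), ← compProd_map_condDistrib hV.aemeasurable,
    lintegral_compProd hΦ, lintegral_map hΦ.lintegral_kernel_prod_right' hZ]

lemma lintegral_lintegral_condDistrib_of_condIndepFun [StandardBorelSpace Ω]
    [StandardBorelSpace α] [Nonempty α] [StandardBorelSpace β] [Nonempty β]
    {U : Ω → α} {V : Ω → β} {Z : Ω → γ} (hU : Measurable U) (hV : Measurable V)
    (hZ : Measurable Z) (hUV : U ⟂ᵢ[Z, hZ; P] V) {Φ : (γ × α) × β → ℝ≥0∞} (hΦ : Measurable Φ) :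
    ∫⁻ ω, ∫⁻ v, Φ ((Z ω, U ω), v) ∂condDistrib V Z P (Z ω) ∂P =
      ∫⁻ ω, Φ ((Z ω, U ω), V ω) ∂P := by
  have hκ := ae_of_ae_map (hZ.prodMk hU).aemeasurable
    ((condIndepFun_iff_condDistrib_prod_ae_eq_prodMkRight hV hU hZ).1 hUV)
  rw [← lintegral_lintegral_condDistrib hV (hZ.prodMk hU) hΦ]
  refine lintegral_congr_ae ?_
  filter_upwards [hκ] with ω hω
  rw [hω, Kernel.prodMkRight_apply]

end Expectation

section Density

variable {Ω E α : Type*} [MeasurableSpace Ω] [MeasurableSpace E] [MeasurableSpace α]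
  {P : Measure Ω} {μ : Measure E} {U : Ω → E}

-- Only an inequality: the density may vanish on a set of positive `μ`-measure.
lemma lintegral_inv_pdf_mul_le [HasPDF U P μ] {Φ : E → ℝ≥0∞} (hΦ : Measurable Φ) :
    ∫⁻ ω, (pdf U P μ (U ω))⁻¹ * Φ (U ω) ∂P ≤ ∫⁻ u, Φ u ∂μ := by
  have hm := measurable_pdf U P μ
  rw [← pdf.lintegral_pdf_mul (X := U) (μ := μ) (f := fun u => (pdf U P μ u)⁻¹ * Φ u)
    (hm.inv.mul hΦ).aemeasurable]
  refine lintegral_mono fun u => ?_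
  rw [← mul_assoc]
  exact mul_le_of_le_one_left' (ENNReal.mul_inv_le_one _)

lemma lintegral_inv_pdf_mul_le_of_indepFun [IsFiniteMeasure P] {V : Ω → α}
    [HasPDF U P μ] (hU : Measurable U) (hV : Measurable V) (hUV : U ⟂ᵢ[P] V)
    {Φ : E × α → ℝ≥0∞} (hΦ : Measurable Φ) :
    ∫⁻ ω, (pdf U P μ (U ω))⁻¹ * Φ (U ω, V ω) ∂P ≤ ∫⁻ ω, ∫⁻ u, Φ (u, V ω) ∂μ ∂P := by
  calc ∫⁻ ω, (pdf U P μ (U ω))⁻¹ * Φ (U ω, V ω) ∂P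
      = ∫⁻ ω, ∫⁻ ω', (pdf U P μ (U ω'))⁻¹ * Φ (U ω', V ω) ∂P ∂P :=
        lintegral_eq_lintegral_lintegral_of_indepFun
          (Φ := fun p => (pdf U P μ p.2)⁻¹ * Φ (p.2, p.1)) hV hU hUV.symm (by fun_prop)
    _ ≤ ∫⁻ ω, ∫⁻ u, Φ (u, V ω) ∂μ ∂P :=
        lintegral_mono fun ω => lintegral_inv_pdf_mul_le (by fun_prop)

end Density

section Convolution

variable {G : Type*} [MeasurableSpace G] {μ : Measure G}

lemma lintegral_mul_sub_eq_lconvolution [AddCommGroup G] [MeasurableAdd G] [IsAddLeftInvariant μ]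
    (φ ψ : G → ℝ≥0∞) (x c : G) :
    ∫⁻ u, φ (x - u) * ψ (c - u) ∂μ = ((fun u => φ (-u)) ⋆ₗ[μ] ψ) (c - x) := by
  rw [lconvolution_def, ← lintegral_add_left_eq_self _ x]
  refine lintegral_congr fun u => ?_
  congr 2 <;> abel

variable [AddGroup G] [MeasurableAdd₂ G] [MeasurableNeg G] [SFinite μ] [IsAddLeftInvariant μ]

lemma lintegral_lconvolution {φ ψ : G → ℝ≥0∞} (hφ : Measurable φ) (hψ : Measurable ψ) :
    ∫⁻ t, (φ ⋆ₗ[μ] ψ) t ∂μ = (∫⁻ t, φ t ∂μ) * ∫⁻ t, ψ t ∂μ := by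
  simp_rw [lconvolution_def]
  rw [lintegral_lintegral_swap (by fun_prop), ← lintegral_mul_const _ hφ]
  refine lintegral_congr fun u => ?_
  rw [lintegral_const_mul _ (by fun_prop), lintegral_add_left_eq_self ψ]

lemma lintegral_lintegral_const_sub [IsNegInvariant μ] {α : Type*} [MeasurableSpace α]
    {ν : Measure α} [SFinite ν] {W : α → G} (hW : Measurable W) {φ : G → ℝ≥0∞}
    (hφ : Measurable φ) :
    ∫⁻ t, ∫⁻ a, φ (W a - t) ∂ν ∂μ = (∫⁻ t, φ t ∂μ) * ν Set.univ := by
  rw [lintegral_lintegral_swap (by fun_prop)]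
  simp_rw [lintegral_sub_left_eq_self φ, lintegral_const]

end Convolution

section Decoupling

variable {Ω G : Type*} [MeasurableSpace Ω] [StandardBorelSpace Ω] [AddCommGroup G]
  [MeasurableSpace G] [StandardBorelSpace G] [MeasurableAdd₂ G] [MeasurableNeg G]
  {P : Measure Ω} {μ : Measure G} [IsAddLeftInvariant μ]

-- Given `Z`, the density of `Y` is `p_X(y + Z) p_Y(y) / p_Z(Z)`, so the weight restores `p_Y`.
lemma lintegral_pdf_mul_inv_pdf_mul_le [IsFiniteMeasure P] {E : Type*} [MeasurableSpace E]
    [StandardBorelSpace E] [Nonempty E] {X Y Z : Ω → G} {V : Ω → E} (hX : Measurable X)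
    (hY : Measurable Y) (hZ : Measurable Z) (hV : Measurable V) [HasPDF X P μ] [HasPDF Z P μ]
    (hXYZ : ∀ ω, X ω - Y ω = Z ω) (hXY : X ⟂ᵢ[P] Y) (hYV : Y ⟂ᵢ[Z, hZ; P] V)
    {Φ : G × G × E → ℝ≥0∞} (hΦ : Measurable Φ) :
    ∫⁻ ω, pdf Z P μ (Z ω) * ((pdf X P μ (X ω))⁻¹ * Φ (Y ω, Z ω, V ω)) ∂P ≤
      ∫⁻ ω, ∫⁻ ω', Φ (Y ω, Z ω', V ω') ∂P ∂P := by
  have hpZ := measurable_pdf Z P μ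
  set κ := condDistrib V Z P
  have hK : Measurable fun p : G × G => ∫⁻ v, Φ (p.2, p.1, v) ∂κ p.1 :=
    Measurable.lintegral_kernel_prod_right' (κ := κ.prodMkRight G)
      (f := fun p : (G × G) × E => Φ (p.1.2, p.1.1, p.2)) (by fun_prop)
  have hX_eq : ∀ ω, X ω = Z ω + Y ω := fun ω => by rw [← hXYZ, sub_add_cancel]
  calc ∫⁻ ω, pdf Z P μ (Z ω) * ((pdf X P μ (X ω))⁻¹ * Φ (Y ω, Z ω, V ω)) ∂P
      = ∫⁻ ω, pdf Z P μ (Z ω) * ((pdf X P μ (Z ω + Y ω))⁻¹ * Φ (Y ω, Z ω, V ω)) ∂P := by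
        simp_rw [hX_eq]
    _ = ∫⁻ ω, ∫⁻ v, pdf Z P μ (Z ω) * ((pdf X P μ (Z ω + Y ω))⁻¹ * Φ (Y ω, Z ω, v))
          ∂κ (Z ω) ∂P :=
        (lintegral_lintegral_condDistrib_of_condIndepFun hY hV hZ hYV
          (Φ := fun p => pdf Z P μ p.1.1 *
            ((pdf X P μ (p.1.1 + p.1.2))⁻¹ * Φ (p.1.2, p.1.1, p.2))) (by fun_prop)).symm
    _ = ∫⁻ ω, (pdf X P μ (X ω))⁻¹ *
          (pdf Z P μ (X ω - Y ω) * ∫⁻ v, Φ (Y ω, X ω - Y ω, v) ∂κ (X ω - Y ω)) ∂P := by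
        refine lintegral_congr fun ω => ?_
        rw [lintegral_const_mul _ (by fun_prop), lintegral_const_mul _ (by fun_prop),
          mul_left_comm, hXYZ, hX_eq]
    _ ≤ ∫⁻ ω, ∫⁻ x, pdf Z P μ (x - Y ω) * ∫⁻ v, Φ (Y ω, x - Y ω, v) ∂κ (x - Y ω) ∂μ ∂P :=
        lintegral_inv_pdf_mul_le_of_indepFun hX hY hXY
          (Φ := fun p => pdf Z P μ (p.1 - p.2) * ∫⁻ v, Φ (p.2, p.1 - p.2, v) ∂κ (p.1 - p.2))
          ((hpZ.comp (by fun_prop)).mul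
            (hK.comp (by fun_prop : Measurable fun p : G × G => (p.1 - p.2, p.2))))
    _ = ∫⁻ ω, ∫⁻ z, pdf Z P μ z * ∫⁻ v, Φ (Y ω, z, v) ∂κ z ∂μ ∂P :=
        lintegral_congr fun ω => lintegral_sub_right_eq_self
          (fun z => pdf Z P μ z * ∫⁻ v, Φ (Y ω, z, v) ∂κ z) (Y ω)
    _ = ∫⁻ ω, ∫⁻ ω', ∫⁻ v, Φ (Y ω, Z ω', v) ∂κ (Z ω') ∂P ∂P :=
        lintegral_congr fun ω => pdf.lintegral_pdf_mul
          (f := fun z => ∫⁻ v, Φ (Y ω, z, v) ∂κ z)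
          (hK.comp (by fun_prop : Measurable fun z => (z, Y ω))).aemeasurable
    _ = ∫⁻ ω, ∫⁻ ω', Φ (Y ω, Z ω', V ω') ∂P ∂P :=
        lintegral_congr fun ω => lintegral_lintegral_condDistrib hV hZ
          (Φ := fun p => Φ (Y ω, p)) (by fun_prop)

lemma lintegral_pdf_mul_inv_pdf_mul_inv_pdf_mul_le [IsFiniteMeasure P] {X₁ Y₁ X₂ Y₂ Z : Ω → G}
    (hX₁ : Measurable X₁) (hY₁ : Measurable Y₁) (hX₂ : Measurable X₂) (hY₂ : Measurable Y₂)
    (hZ : Measurable Z) [HasPDF X₁ P μ] [HasPDF Y₂ P μ] [HasPDF Z P μ]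
    (hZ₁ : ∀ ω, X₁ ω - Y₁ ω = Z ω)
    (hZ₂ : ∀ ω, X₂ ω - Y₂ ω = Z ω) (hXY₁ : X₁ ⟂ᵢ[P] Y₁) (hXY₂ : X₂ ⟂ᵢ[P] Y₂)
    (hci : Y₁ ⟂ᵢ[Z, hZ; P] Y₂) {Φ : G × G × G → ℝ≥0∞} (hΦ : Measurable Φ) :
    ∫⁻ ω, pdf Z P μ (Z ω) * ((pdf X₁ P μ (X₁ ω))⁻¹ *
        ((pdf Y₂ P μ (Y₂ ω))⁻¹ * Φ (Y₁ ω, X₂ ω, Y₂ ω))) ∂P ≤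
      ∫⁻ ω, ∫⁻ ω', ∫⁻ y, Φ (Y₁ ω, X₂ ω', y) ∂μ ∂P ∂P := by
  have hX₂_eq : ∀ ω, X₂ ω = Z ω + Y₂ ω := fun ω => by rw [← hZ₂, sub_add_cancel]
  calc ∫⁻ ω, pdf Z P μ (Z ω) * ((pdf X₁ P μ (X₁ ω))⁻¹ *
        ((pdf Y₂ P μ (Y₂ ω))⁻¹ * Φ (Y₁ ω, X₂ ω, Y₂ ω))) ∂P
      ≤ ∫⁻ ω, ∫⁻ ω', (pdf Y₂ P μ (Y₂ ω'))⁻¹ * Φ (Y₁ ω, X₂ ω', Y₂ ω') ∂P ∂P := by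
        simp_rw [hX₂_eq]
        exact lintegral_pdf_mul_inv_pdf_mul_le hX₁ hY₁ hZ hY₂ hZ₁ hXY₁ hci
          (Φ := fun p => (pdf Y₂ P μ p.2.2)⁻¹ * Φ (p.1, p.2.1 + p.2.2, p.2.2)) (by fun_prop)
    _ ≤ ∫⁻ ω, ∫⁻ ω', ∫⁻ y, Φ (Y₁ ω, X₂ ω', y) ∂μ ∂P ∂P :=
        lintegral_mono fun ω => lintegral_inv_pdf_mul_le_of_indepFun hY₂ hX₂ hXY₂.symm
          (Φ := fun p => Φ (Y₁ ω, p.2, p.1)) (by fun_prop)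

lemma lintegral_pdf_ratio_le_lintegral_lconvolution [IsFiniteMeasure P] [SFinite μ]
    {X₁ Y₁ X₂ Y₂ Z : Ω → G} (hX₁ : Measurable X₁) (hY₁ : Measurable Y₁) (hX₂ : Measurable X₂)
    (hY₂ : Measurable Y₂) (hZ : Measurable Z) [HasPDF X₁ P μ] [HasPDF Y₂ P μ] [HasPDF Z P μ]
    (hZ₁ : ∀ ω, X₁ ω - Y₁ ω = Z ω) (hZ₂ : ∀ ω, X₂ ω - Y₂ ω = Z ω) (hXY₁ : X₁ ⟂ᵢ[P] Y₁)
    (hXY₂ : X₂ ⟂ᵢ[P] Y₂) (hci : Y₁ ⟂ᵢ[Z, hZ; P] Y₂) {φ ψ : G → ℝ≥0∞} (hφ : Measurable φ)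
    (hψ : Measurable ψ) (x y : G) :
    ∫⁻ ω, pdf Z P μ (Z ω) * ((pdf X₁ P μ (X₁ ω))⁻¹ *
        ((pdf Y₂ P μ (Y₂ ω))⁻¹ * (φ (x - Y₂ ω) * ψ (X₁ ω - y)))) ∂P ≤
      ∫⁻ p, ((fun u => φ (-u)) ⋆ₗ[μ] ψ) (Y₁ p.1 + X₂ p.2 - (x + y)) ∂P.prod P := by
  have hX₁_eq : ∀ ω, X₁ ω - y = Y₁ ω + X₂ ω - y - Y₂ ω := fun ω => by
    rw [sub_eq_iff_eq_add.1 (hZ₁ ω), ← hZ₂]; abel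
  have hsub : ∀ c, c - y - x = c - (x + y) := fun c => by abel
  have hbound := lintegral_pdf_mul_inv_pdf_mul_inv_pdf_mul_le (μ := μ) hX₁ hY₁ hX₂ hY₂ hZ hZ₁ hZ₂
    hXY₁ hXY₂ hci (Φ := fun p => φ (x - p.2.2) * ψ (p.1 + p.2.1 - y - p.2.2)) (by fun_prop)
  simp_rw [lintegral_mul_sub_eq_lconvolution, hsub, ← hX₁_eq] at hbound
  rwa [lintegral_prod _ (by fun_prop)]

lemma lintegral_pdf_ratio_le [IsProbabilityMeasure P] [SFinite μ] [IsNegInvariant μ]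
    {X₁ Y₁ X₂ Y₂ X₃ Y₃ Z : Ω → G}
    (hX₁ : Measurable X₁) (hY₁ : Measurable Y₁) (hX₂ : Measurable X₂) (hY₂ : Measurable Y₂)
    (hX₃ : Measurable X₃) (hY₃ : Measurable Y₃) (hZ : Measurable Z) [HasPDF X₁ P μ]
    [HasPDF Y₂ P μ] [HasPDF Z P μ] [HasPDF (X₃ + Y₃) P μ] (hZ₁ : ∀ ω, X₁ ω - Y₁ ω = Z ω)
    (hZ₂ : ∀ ω, X₂ ω - Y₂ ω = Z ω) (hXY₁ : X₁ ⟂ᵢ[P] Y₁) (hXY₂ : X₂ ⟂ᵢ[P] Y₂)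
    (hci : Y₁ ⟂ᵢ[Z, hZ; P] Y₂)
    (hind₃ : (fun ω => (X₃ ω, Y₃ ω)) ⟂ᵢ[P] fun ω => (X₁ ω, Y₁ ω, X₂ ω, Y₂ ω))
    {φ ψ : G → ℝ≥0∞} (hφ : Measurable φ) (hψ : Measurable ψ) :
    ∫⁻ ω, (pdf (X₃ + Y₃) P μ ((X₃ + Y₃) ω))⁻¹ * (pdf Z P μ (Z ω) * ((pdf X₁ P μ (X₁ ω))⁻¹ *
        ((pdf Y₂ P μ (Y₂ ω))⁻¹ * (φ ((X₃ - Y₂) ω) * ψ ((X₁ - Y₃) ω))))) ∂P ≤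
      (∫⁻ u, φ u ∂μ) * ∫⁻ u, ψ u ∂μ := by
  have hpS := measurable_pdf (X₃ + Y₃) P μ
  set pS := pdf (X₃ + Y₃) P μ
  set θ := (fun u => φ (-u)) ⋆ₗ[μ] ψ
  have hθ : Measurable θ := by fun_prop
  calc ∫⁻ ω, (pS ((X₃ + Y₃) ω))⁻¹ * (pdf Z P μ (Z ω) * ((pdf X₁ P μ (X₁ ω))⁻¹ *
        ((pdf Y₂ P μ (Y₂ ω))⁻¹ * (φ ((X₃ - Y₂) ω) * ψ ((X₁ - Y₃) ω))))) ∂P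
      = ∫⁻ ω, ∫⁻ ω', (pS (X₃ ω + Y₃ ω))⁻¹ * (pdf Z P μ (Z ω') * ((pdf X₁ P μ (X₁ ω'))⁻¹ *
          ((pdf Y₂ P μ (Y₂ ω'))⁻¹ * (φ (X₃ ω - Y₂ ω') * ψ (X₁ ω' - Y₃ ω))))) ∂P ∂P := by
        simp_rw [← hZ₁]
        exact lintegral_eq_lintegral_lintegral_of_indepFun (hX₃.prodMk hY₃)
          (hX₁.prodMk (hY₁.prodMk (hX₂.prodMk hY₂))) hind₃
          (Φ := fun p => (pS (p.1.1 + p.1.2))⁻¹ * (pdf Z P μ (p.2.1 - p.2.2.1) *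
            ((pdf X₁ P μ p.2.1)⁻¹ * ((pdf Y₂ P μ p.2.2.2.2)⁻¹ *
              (φ (p.1.1 - p.2.2.2.2) * ψ (p.2.1 - p.1.2)))))) (by fun_prop)
    _ ≤ ∫⁻ ω, (pS ((X₃ + Y₃) ω))⁻¹ *
          ∫⁻ p, θ (Y₁ p.1 + X₂ p.2 - (X₃ + Y₃) ω) ∂P.prod P ∂P := by
        refine lintegral_mono fun ω => ?_
        rw [lintegral_const_mul _ (by fun_prop)]
        exact mul_le_mul_right (lintegral_pdf_ratio_le_lintegral_lconvolution hX₁ hY₁ hX₂ hY₂ hZ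
          hZ₁ hZ₂ hXY₁ hXY₂ hci hφ hψ (X₃ ω) (Y₃ ω)) _
    _ ≤ ∫⁻ t, ∫⁻ p, θ (Y₁ p.1 + X₂ p.2 - t) ∂P.prod P ∂μ :=
        lintegral_inv_pdf_mul_le (Φ := fun t => ∫⁻ p, θ (Y₁ p.1 + X₂ p.2 - t) ∂P.prod P)
          (by fun_prop)
    _ = (∫⁻ u, φ u ∂μ) * ∫⁻ u, ψ u ∂μ := by
        rw [lintegral_lintegral_const_sub (by fun_prop) hθ, lintegral_lconvolution (by fun_prop) hψ,
          lintegral_neg_eq_self φ, measure_univ, mul_one]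

end Decoupling

lemma integral_log_toReal_nonpos {Ω : Type*} [MeasurableSpace Ω] {P : Measure Ω}
    [IsProbabilityMeasure P] {R : Ω → ℝ≥0∞} (hR : AEMeasurable R P)
    (hR_pos : ∀ᵐ ω ∂P, 0 < (R ω).toReal)
    (hlog : Integrable (fun ω => Real.log (R ω).toReal) P) (hR_le : ∫⁻ ω, R ω ∂P ≤ 1) :
    ∫ ω, Real.log (R ω).toReal ∂P ≤ 0 := by
  have hR_ne_top : ∫⁻ ω, R ω ∂P ≠ ∞ := (hR_le.trans_lt ENNReal.one_lt_top).ne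
  have hR_lt_top : ∀ᵐ ω ∂P, R ω < ∞ := ae_lt_top' hR hR_ne_top
  have hR_int : Integrable (fun ω => (R ω).toReal) P :=
    integrable_toReal_of_lintegral_ne_top hR hR_ne_top
  calc ∫ ω, Real.log (R ω).toReal ∂P
      ≤ ∫ ω, ((R ω).toReal - 1) ∂P := by
        refine integral_mono_ae hlog (hR_int.sub (integrable_const 1)) ?_
        filter_upwards [hR_pos] with ω hω using Real.log_le_sub_one_of_pos hω
    _ = (∫⁻ ω, R ω ∂P).toReal - 1 := by
        rw [integral_sub hR_int (integrable_const 1), integral_toReal hR hR_lt_top]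
        simp
    _ ≤ 0 := by
        rw [sub_nonpos]
        exact ENNReal.toReal_le_of_le_ofReal zero_le_one (by simpa using hR_le)

section LogRatio

variable {ι κ : Type*} [Fintype ι] [Fintype κ] {a : ι → ℝ≥0∞} {b : κ → ℝ≥0∞}

lemma toReal_prod_inv_mul_prod_pos (ha : ∀ i, 0 < (a i).toReal) (hb : ∀ j, 0 < (b j).toReal) :
    0 < ((∏ i, (a i)⁻¹) * ∏ j, b j).toReal := by
  simp only [ENNReal.toReal_mul, ENNReal.toReal_prod, ENNReal.toReal_inv]
  exact mul_pos (Finset.prod_pos fun i _ => inv_pos.2 (ha i)) (Finset.prod_pos fun j _ => hb j)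

lemma log_toReal_prod_inv_mul_prod (ha : ∀ i, 0 < (a i).toReal) (hb : ∀ j, 0 < (b j).toReal) :
    Real.log ((∏ i, (a i)⁻¹) * ∏ j, b j).toReal =
      ∑ j, Real.log (b j).toReal - ∑ i, Real.log (a i).toReal := by
  have ha' i : (a i).toReal⁻¹ ≠ 0 := inv_ne_zero (ha i).ne'
  have hb' j : (b j).toReal ≠ 0 := (hb j).ne'
  simp only [ENNReal.toReal_mul, ENNReal.toReal_prod, ENNReal.toReal_inv]
  rw [Real.log_mul (Finset.prod_ne_zero_iff.2 fun i _ => ha' i)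
    (Finset.prod_ne_zero_iff.2 fun j _ => hb' j), Real.log_prod fun i _ => ha' i,
    Real.log_prod fun j _ => hb' j]
  simp only [Real.log_inv, Finset.sum_neg_distrib, neg_add_eq_sub]

end LogRatio

section Entropy

variable {Ω E : Type*} [MeasurableSpace Ω] [MeasurableSpace E] {P : Measure Ω} {μ : Measure E}
  {X : Ω → E}

lemma dent_eq_neg_integral_log_pdf (hX : Measurable X) :
    dent μ P X = -∫ ω, Real.log (pdf X P μ (X ω)).toReal ∂P := by
  rw [dent, integral_map hX.aemeasurable, pdf_def]
  exact (measurable_rnDeriv _ _).ennreal_toReal.log.aestronglyMeasurable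

namespace FiniteDent

lemma integrable_log_pdf (h : FiniteDent μ P X) (hX : Measurable X) :
    Integrable (fun ω => Real.log (pdf X P μ (X ω)).toReal) P :=
  h.2.comp_measurable hX

lemma hasPDF [SFinite P] [SigmaFinite μ] (h : FiniteDent μ P X) (hX : Measurable X) :
    HasPDF X P μ :=
  (hasPDF_iff_of_aemeasurable hX.aemeasurable).2 ⟨inferInstance, h.1⟩

end FiniteDent

lemma toReal_pdf_pos_ae [IsFiniteMeasure P] [HasPDF X P μ] :
    ∀ᵐ ω ∂P, 0 < (pdf X P μ (X ω)).toReal := by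
  have hac : P.map X ≪ μ := HasPDF.absolutelyContinuous
  refine ae_of_ae_map (p := fun x => 0 < (pdf X P μ x).toReal) (HasPDF.aemeasurable X P μ) ?_
  filter_upwards [rnDeriv_pos hac, hac.ae_le (rnDeriv_lt_top (P.map X) μ)] with x hpos htop
  exact ENNReal.toReal_pos hpos.ne' htop.ne

lemma sum_dent_le_sum_dent_of_lintegral_pdf_ratio_le_one [IsProbabilityMeasure P] [SigmaFinite μ]
    {ι κ : Type*} [Fintype ι] [Fintype κ] {U : ι → Ω → E} {V : κ → Ω → E}
    (hU : ∀ i, Measurable (U i)) (hV : ∀ j, Measurable (V j))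
    (hU_fin : ∀ i, FiniteDent μ P (U i)) (hV_fin : ∀ j, FiniteDent μ P (V j))
    (h : ∫⁻ ω, (∏ i, (pdf (U i) P μ (U i ω))⁻¹) * ∏ j, pdf (V j) P μ (V j ω) ∂P ≤ 1) :
    ∑ i, dent μ P (U i) ≤ ∑ j, dent μ P (V j) := by
  have hU_pdf i := (hU_fin i).hasPDF (hU i)
  have hV_pdf j := (hV_fin j).hasPDF (hV j)
  have hU_int i := (hU_fin i).integrable_log_pdf (hU i)
  have hV_int j := (hV_fin j).integrable_log_pdf (hV j)
  have hpos := (ae_all_iff.2 fun i => toReal_pdf_pos_ae (P := P) (μ := μ) (X := U i)).and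
    (ae_all_iff.2 fun j => toReal_pdf_pos_ae (P := P) (μ := μ) (X := V j))
  have hlog := hpos.mono fun ω hω => log_toReal_prod_inv_mul_prod hω.1 hω.2
  have hU_sum := integrable_finsetSum Finset.univ fun i _ => hU_int i
  have hV_sum := integrable_finsetSum Finset.univ fun j _ => hV_int j
  have hnonpos := integral_log_toReal_nonpos (by fun_prop)
    (hpos.mono fun ω hω => toReal_prod_inv_mul_prod_pos hω.1 hω.2)
    ((hV_sum.sub hU_sum).congr (hlog.mono fun ω hω => hω.symm)) h
  rw [integral_congr_ae hlog, integral_sub hV_sum hU_sum, integral_finsetSum _ fun j _ => hV_int j,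
    integral_finsetSum _ fun i _ => hU_int i] at hnonpos
  simp_rw [dent_eq_neg_integral_log_pdf (hU _), dent_eq_neg_integral_log_pdf (hV _),
    Finset.sum_neg_distrib]
  linarith

end Entropy

theorem cond_indep_sum_diff_ineq_general {Ω G : Type*} [MeasurableSpace Ω] [StandardBorelSpace Ω]
    [AddCommGroup G] [MeasurableSpace G] [StandardBorelSpace G] [MeasurableAdd₂ G]
    [MeasurableNeg G] {P : Measure Ω} [IsProbabilityMeasure P] {μ : Measure G} [SigmaFinite μ]
    [IsAddLeftInvariant μ] [IsNegInvariant μ] {X₁ Y₁ X₂ Y₂ X₃ Y₃ Z : Ω → G}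
    (hX₁ : Measurable X₁) (hY₁ : Measurable Y₁) (hX₂ : Measurable X₂) (hY₂ : Measurable Y₂)
    (hX₃ : Measurable X₃) (hY₃ : Measurable Y₃) (hZ : Measurable Z)
    (hZ₁ : ∀ ω, X₁ ω - Y₁ ω = Z ω) (hZ₂ : ∀ ω, X₂ ω - Y₂ ω = Z ω) (hXY₁ : X₁ ⟂ᵢ[P] Y₁)
    (hXY₂ : X₂ ⟂ᵢ[P] Y₂) (hci : Y₁ ⟂ᵢ[Z, hZ; P] Y₂)
    (hind₃ : (fun ω => (X₃ ω, Y₃ ω)) ⟂ᵢ[P] fun ω => (X₁ ω, Y₁ ω, X₂ ω, Y₂ ω))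
    (h_sum : FiniteDent μ P (X₃ + Y₃)) (h_X₁ : FiniteDent μ P X₁) (h_Y₂ : FiniteDent μ P Y₂)
    (h_diff₃₂ : FiniteDent μ P (X₃ - Y₂)) (h_diff₁₃ : FiniteDent μ P (X₁ - Y₃))
    (h_Z : FiniteDent μ P Z) :
    dent μ P (X₃ + Y₃) + dent μ P X₁ + dent μ P Y₂ ≤
      dent μ P (X₃ - Y₂) + dent μ P (X₁ - Y₃) + dent μ P Z := by
  have hS : Measurable (X₃ + Y₃) := hX₃.add hY₃
  have hA : Measurable (X₃ - Y₂) := hX₃.sub hY₂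
  have hB : Measurable (X₁ - Y₃) := hX₁.sub hY₃
  have := h_sum.hasPDF hS
  have := h_X₁.hasPDF hX₁
  have := h_Y₂.hasPDF hY₂
  have := h_diff₃₂.hasPDF hA
  have := h_diff₁₃.hasPDF hB
  have := h_Z.hasPDF hZ
  have hratio := lintegral_pdf_ratio_le (μ := μ) hX₁ hY₁ hX₂ hY₂ hX₃ hY₃ hZ hZ₁ hZ₂ hXY₁ hXY₂
    hci hind₃ (measurable_pdf (X₃ - Y₂) P μ) (measurable_pdf (X₁ - Y₃) P μ)
  simp only [pdf.lintegral_eq_measure_univ, measure_univ, mul_one] at hratio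
  have hsum := sum_dent_le_sum_dent_of_lintegral_pdf_ratio_le_one (P := P) (μ := μ)
    (U := ![X₃ + Y₃, X₁, Y₂]) (V := ![X₃ - Y₂, X₁ - Y₃, Z])
    (by simp [Fin.forall_fin_succ, *]) (by simp [Fin.forall_fin_succ, *])
    (by simp [Fin.forall_fin_succ, *]) (by simp [Fin.forall_fin_succ, *])
    (by
      refine (lintegral_congr fun ω => ?_).trans_le hratio
      simp only [Fin.prod_univ_three, Matrix.cons_val, Pi.add_apply, Pi.sub_apply]
      ring)
  simpa [Fin.sum_univ_three] using hsum

/-- Suppose `X, Y` are independent continuous random variables, `Z = X - Y`, and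
`(X₁,Y₁)`, `(X₂,Y₂)` are two conditionally independent versions of `(X,Y)` given `Z`
(each pair is distributed as `(X,Y)`, satisfies `Xᵢ - Yᵢ = Z`, and the two pairs are
conditionally independent given `Z`).  If `(X₃,Y₃)` is distributed as `(X,Y)` and
independent of `(X₁,Y₁,X₂,Y₂)`, and all relevant differential entropies exist and are
finite, then `h(X₃+Y₃) + h(X₁) + h(Y₂) ≤ h(X₃-Y₂) + h(X₁-Y₃) + h(Z)`. -/
theorem cond_indep_sum_diff_ineq
    {Ω₀ : Type*} [MeasurableSpace Ω₀] (P₀ : Measure Ω₀) [IsProbabilityMeasure P₀]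
    {Ω : Type*} [MeasurableSpace Ω] [StandardBorelSpace Ω]
    (P : Measure Ω) [IsProbabilityMeasure P]
    (X Y : Ω₀ → ℝ) (hX : Measurable X) (hY : Measurable Y) (hindep : IndepFun X Y P₀)
    (X₁ Y₁ X₂ Y₂ X₃ Y₃ Z : Ω → ℝ)
    (hX₁ : Measurable X₁) (hY₁ : Measurable Y₁) (hX₂ : Measurable X₂)
    (hY₂ : Measurable Y₂) (hX₃ : Measurable X₃) (hY₃ : Measurable Y₃)
    (hZ : Measurable Z)
    (hZ₁ : ∀ ω, X₁ ω - Y₁ ω = Z ω) (hZ₂ : ∀ ω, X₂ ω - Y₂ ω = Z ω)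
    (hid₁ : IdentDistrib (fun ω => (X₁ ω, Y₁ ω)) (fun ω => (X ω, Y ω)) P P₀)
    (hid₂ : IdentDistrib (fun ω => (X₂ ω, Y₂ ω)) (fun ω => (X ω, Y ω)) P P₀)
    (hid₃ : IdentDistrib (fun ω => (X₃ ω, Y₃ ω)) (fun ω => (X ω, Y ω)) P P₀)
    (hci : CondIndepFun (MeasurableSpace.comap Z inferInstance) hZ.comap_le
      (fun ω => (X₁ ω, Y₁ ω)) (fun ω => (X₂ ω, Y₂ ω)) P)
    (hind₃ : IndepFun (fun ω => (X₃ ω, Y₃ ω)) (fun ω => (X₁ ω, Y₁ ω, X₂ ω, Y₂ ω)) P)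
    (h1 : FiniteDent volume P (X₃ + Y₃)) (h2 : FiniteDent volume P X₁)
    (h3 : FiniteDent volume P Y₂) (h4 : FiniteDent volume P (X₃ - Y₂))
    (h5 : FiniteDent volume P (X₁ - Y₃)) (h6 : FiniteDent volume P Z) :
    dent volume P (X₃ + Y₃) + dent volume P X₁ + dent volume P Y₂ ≤
      dent volume P (X₃ - Y₂) + dent volume P (X₁ - Y₃) + dent volume P Z := by
  exact cond_indep_sum_diff_ineq_general hX₁ hY₁ hX₂ hY₂ hX₃ hY₃ hZ hZ₁ hZ₂
    (indepFun_of_identDistrib_pair hindep hid₁.symm)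
    (indepFun_of_identDistrib_pair hindep hid₂.symm)
    (hci.comp measurable_snd measurable_snd) hind₃ h1 h2 h3 h4 h5 h6
end

section
/- Weak Balog-Szemerédi-Gowers lemma for differential entropy: Suppose X, Y are real-valued continuous random variables with all relevant differential entropies existing and finite, satisfying h(X,Y) ≥ h(X) + h(Y) - log K and h(X+Y) ≤ (1/2)h(X) + (1/2)h(Y) + log K for some K ≥ 1. Let X1, X2 be conditionally independent versions of X given Y (i.e., (X1,Y) and (X2,Y) each have the same joint distribution as (X,Y), and X1, X2 are conditionally independent given Y). Then h(X1 - X2 | Y) ≤ h(X) + 4 log K. -/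
open MeasureTheory ProbabilityTheory

/-- The conditional differential entropy `h(U|V) = h(U,V) - h(V)`. -/
noncomputable def condDent {Ω E F : Type*} [MeasurableSpace Ω] [MeasureSpace E] [MeasureSpace F]
    (P : Measure Ω) (U : Ω → E) (V : Ω → F) : ℝ :=
  dent volume P (fun ω => (U ω, V ω)) - dent volume P V

/-!
Write `S₁ = X₁ + Y`, `S₂ = X₂ + Y` and `D = X₁ - X₂ = S₁ - S₂`. Submodularity gives
`h(D, X₂, S₂) + h(D) ≤ h(D, X₂) + h(D, S₂)`. On the left, `(D, X₂, S₂)` is a measure-preserving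
image of `(Y, X₁, X₂)`, whose entropy is `h(X₁, Y) + h(X₂, Y) - h(Y)` by conditional independence.
On the right, `(D, X₂)` determines `(X₁, X₂)` and `(D, S₂)` determines `(S₁, S₂)`, both by
measure-preserving maps, so the two terms are at most `h(X₁) + h(X₂)` and `h(S₁) + h(S₂)`. Adding
`h(D, Y) ≤ h(D) + h(Y)` cancels `h(D)`.

The entropies of `D`, `(D, X₂)` and `(D, S₂)` are not known to be finite, so these cannot be added
as inequalities between integrals. Each of them has the form `E[f] ≤ 0` with `E[exp f] ≤ 1`, and
the latter property passes to the average of the four functions `f`, in which the three possibly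
infinite entropies cancel pointwise.
-/

open scoped ENNReal

section Density

variable {Ω E F F' : Type*} [MeasurableSpace Ω] [MeasurableSpace E] [MeasurableSpace F]
  [MeasurableSpace F'] {P : Measure Ω} {μ : Measure E} {ν : Measure F} {ξ : Measure F'}

lemma ae_comp_of_hasPDF {Z : Ω → E} [HasPDF Z P μ] {p : E → Prop} (h : ∀ᵐ x ∂μ, p x) :
    ∀ᵐ ω ∂P, p (Z ω) :=
  ae_of_ae_map (HasPDF.aemeasurable Z P μ) (HasPDF.absolutelyContinuous.ae_le h)

lemma ae_pdf_comp_ne_zero {Z : Ω → E} [HasPDF Z P μ] : ∀ᵐ ω ∂P, pdf Z P μ (Z ω) ≠ 0 := by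
  refine ae_of_ae_map (p := fun x => pdf Z P μ x ≠ 0) (HasPDF.aemeasurable Z P μ) ?_
  rw [map_eq_withDensity_pdf Z P μ, ae_withDensity_iff (measurable_pdf Z P μ)]
  exact .of_forall fun _ => id

lemma lintegral_pdf_le_one [IsProbabilityMeasure P] (Z : Ω → E) : ∫⁻ x, pdf Z P μ x ∂μ ≤ 1 := by
  simpa using (setLIntegral_pdf_le_map Z P μ Set.univ).trans prob_le_one

lemma hasPDF_fst [SFinite P] [SigmaFinite μ] {U : Ω → E} {V : Ω → F}
    (_ : HasPDF (fun ω => (U ω, V ω)) P (μ.prod ν)) : HasPDF U P μ :=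
  pdf.quasiMeasurePreserving_hasPDF' (μ := μ.prod ν) (fun ω => (U ω, V ω))
    Measure.quasiMeasurePreserving_fst

lemma hasPDF_snd [SFinite P] [SigmaFinite ν] {U : Ω → E} {V : Ω → F}
    (_ : HasPDF (fun ω => (U ω, V ω)) P (μ.prod ν)) : HasPDF V P ν :=
  pdf.quasiMeasurePreserving_hasPDF' (μ := μ.prod ν) (fun ω => (U ω, V ω))
    Measure.quasiMeasurePreserving_snd

lemma hasPDF_swap [SFinite P] [SigmaFinite μ] [SigmaFinite ν] {U : Ω → E} {V : Ω → F}
    (_ : HasPDF (fun ω => (U ω, V ω)) P (μ.prod ν)) :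
    HasPDF (fun ω => (V ω, U ω)) P (ν.prod μ) :=
  pdf.quasiMeasurePreserving_hasPDF' (μ := μ.prod ν) (fun ω => (U ω, V ω))
    Measure.measurePreserving_swap.quasiMeasurePreserving

lemma hasPDF_prodMk_fst [SFinite P] [SigmaFinite μ] [SigmaFinite ν] [SigmaFinite ξ] {U : Ω → E}
    {V : Ω → F} {W : Ω → F'} (_ : HasPDF (fun ω => (U ω, V ω, W ω)) P (μ.prod (ν.prod ξ))) :
    HasPDF (fun ω => (U ω, V ω)) P (μ.prod ν) :=
  pdf.quasiMeasurePreserving_hasPDF' (μ := μ.prod (ν.prod ξ)) (fun ω => (U ω, V ω, W ω))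
    (QuasiMeasurePreserving.prodMap (.id μ) Measure.quasiMeasurePreserving_fst)

lemma hasPDF_prodMk_snd [SFinite P] [SigmaFinite μ] [SigmaFinite ν] [SigmaFinite ξ] {U : Ω → E}
    {V : Ω → F} {W : Ω → F'} (_ : HasPDF (fun ω => (U ω, V ω, W ω)) P (μ.prod (ν.prod ξ))) :
    HasPDF (fun ω => (U ω, W ω)) P (μ.prod ξ) :=
  pdf.quasiMeasurePreserving_hasPDF' (μ := μ.prod (ν.prod ξ)) (fun ω => (U ω, V ω, W ω))
    (QuasiMeasurePreserving.prodMap (.id μ) Measure.quasiMeasurePreserving_snd)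

lemma lintegral_pdf_prodMk_ae_eq [IsFiniteMeasure P] [SigmaFinite μ] [SigmaFinite ν]
    {U : Ω → E} {V : Ω → F} (h : HasPDF (fun ω => (U ω, V ω)) P (μ.prod ν)) :
    (fun u => ∫⁻ v, pdf (fun ω => (U ω, V ω)) P (μ.prod ν) (u, v) ∂ν) =ᵐ[μ] pdf U P μ := by
  have hU := hasPDF_fst h
  refine ((pdf.eq_of_map_eq_withDensity _ (by fun_prop)).1 ?_).symm
  refine Measure.ext_of_lintegral _ fun g hg => ?_
  rw [lintegral_map' hg.aemeasurable (HasPDF.aemeasurable U P μ),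
    ← pdf.lintegral_pdf_mul (X := fun ω => (U ω, V ω)) (μ := μ.prod ν) (f := fun z => g z.1)
      (by fun_prop),
    lintegral_prod _ (by fun_prop), lintegral_withDensity_eq_lintegral_mul _ (by fun_prop) hg]
  refine lintegral_congr fun u => ?_
  simp only [Pi.mul_apply]
  rw [lintegral_mul_const _ (by fun_prop)]

end Density

section LogEVariable

variable {Ω : Type*} [MeasurableSpace Ω] {P : Measure Ω} {f g : Ω → ℝ}

/-- `f` is the logarithm of an e-variable, that is, `E[exp f] ≤ 1`. Entropy inequalities are stated
in this form because, unlike `E[f] ≤ 0`, it can be averaged and needs no integrability of `f`. -/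
structure IsLogEVariable (f : Ω → ℝ) (P : Measure Ω) : Prop where
  aemeasurable : AEMeasurable f P
  lintegral_exp_le_one : ∫⁻ ω, ENNReal.ofReal (Real.exp (f ω)) ∂P ≤ 1

lemma IsLogEVariable.congr (hf : IsLogEVariable f P) (hfg : f =ᵐ[P] g) : IsLogEVariable g P where
  aemeasurable := hf.aemeasurable.congr hfg
  lintegral_exp_le_one := by
    have hexp := hfg.symm.fun_comp fun t => ENNReal.ofReal (Real.exp t)
    exact (lintegral_congr_ae hexp).trans_le hf.lintegral_exp_le_one

lemma IsLogEVariable.add_div_two (hf : IsLogEVariable f P) (hg : IsLogEVariable g P) :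
    IsLogEVariable (fun ω => (f ω + g ω) / 2) P where
  aemeasurable := (hf.aemeasurable.add hg.aemeasurable).div_const 2
  lintegral_exp_le_one := by
    have hmid (ω : Ω) : ENNReal.ofReal (Real.exp ((f ω + g ω) / 2)) ≤
        2⁻¹ * ENNReal.ofReal (Real.exp (f ω)) + 2⁻¹ * ENNReal.ofReal (Real.exp (g ω)) := by
      have hconv : Real.exp ((2⁻¹ : ℝ) • f ω + (2⁻¹ : ℝ) • g ω) ≤
          (2⁻¹ : ℝ) • Real.exp (f ω) + (2⁻¹ : ℝ) • Real.exp (g ω) :=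
        convexOn_exp.2 (Set.mem_univ _) (Set.mem_univ _) (by norm_num) (by norm_num) (by norm_num)
      have htwo : ENNReal.ofReal 2⁻¹ = 2⁻¹ := by
        rw [ENNReal.ofReal_inv_of_pos two_pos, ENNReal.ofReal_ofNat]
      rw [← htwo, ← ENNReal.ofReal_mul (by norm_num), ← ENNReal.ofReal_mul (by norm_num),
        ← ENNReal.ofReal_add (by positivity) (by positivity)]
      refine ENNReal.ofReal_le_ofReal (le_trans (le_of_eq ?_) hconv)
      simp only [smul_eq_mul]
      ring_nf
    calc
      _ ≤ ∫⁻ ω, 2⁻¹ * ENNReal.ofReal (Real.exp (f ω)) +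
            2⁻¹ * ENNReal.ofReal (Real.exp (g ω)) ∂P := lintegral_mono hmid
      _ = 2⁻¹ * ∫⁻ ω, ENNReal.ofReal (Real.exp (f ω)) ∂P +
            2⁻¹ * ∫⁻ ω, ENNReal.ofReal (Real.exp (g ω)) ∂P := by
        rw [lintegral_add_left' (hf.aemeasurable.exp.ennreal_ofReal.const_mul _),
          lintegral_const_mul'' _ hf.aemeasurable.exp.ennreal_ofReal,
          lintegral_const_mul'' _ hg.aemeasurable.exp.ennreal_ofReal]
      _ ≤ 2⁻¹ * 1 + 2⁻¹ * 1 := by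
        gcongr
        exacts [hf.lintegral_exp_le_one, hg.lintegral_exp_le_one]
      _ = 1 := by rw [mul_one, ENNReal.inv_two_add_inv_two]

lemma IsLogEVariable.integral_nonpos [IsProbabilityMeasure P] (hf : IsLogEVariable f P)
    (hint : Integrable f P) : ∫ ω, f ω ∂P ≤ 0 := by
  have hmeas : AEStronglyMeasurable (fun ω => Real.exp (f ω)) P :=
    hf.aemeasurable.exp.aestronglyMeasurable
  have hnonneg : 0 ≤ᵐ[P] fun ω => Real.exp (f ω) := .of_forall fun ω => (Real.exp_pos _).le
  have hexp_int : Integrable (fun ω => Real.exp (f ω)) P :=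
    (lintegral_ofReal_ne_top_iff_integrable hmeas hnonneg).1
      (ne_top_of_le_ne_top ENNReal.one_ne_top hf.lintegral_exp_le_one)
  have hexp_le : ∫ ω, Real.exp (f ω) ∂P ≤ 1 := by
    rw [integral_eq_lintegral_of_nonneg_ae hnonneg hmeas]
    exact ENNReal.toReal_le_of_le_ofReal zero_le_one
      (hf.lintegral_exp_le_one.trans_eq ENNReal.ofReal_one.symm)
  calc
    ∫ ω, f ω ∂P ≤ ∫ ω, (Real.exp (f ω) - 1) ∂P :=
      integral_mono hint (hexp_int.sub (integrable_const 1)) fun ω => by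
        linarith [Real.add_one_le_exp (f ω)]
    _ = ∫ ω, Real.exp (f ω) ∂P - 1 := by
      rw [integral_sub hexp_int (integrable_const 1), integral_const, probReal_univ, one_smul]
    _ ≤ 0 := sub_nonpos.2 hexp_le

end LogEVariable

section Surprisal

variable {Ω E F F' : Type*} [MeasurableSpace Ω] [MeasurableSpace E] [MeasurableSpace F]
  [MeasurableSpace F'] {P : Measure Ω} {μ : Measure E} {ν : Measure F} {ξ : Measure F'}

/-- The surprisal (pointwise information content) `-log f(Z)` of a random variable `Z` with density
`f`, as a random variable on the same sample space; its expectation is the differential entropy.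
Keeping it on the sample space makes the surprisals of different variables comparable. -/
noncomputable def surprisal (μ : Measure E) (P : Measure Ω) (Z : Ω → E) (ω : Ω) : ℝ :=
  -Real.log (pdf Z P μ (Z ω)).toReal

lemma aemeasurable_surprisal {Z : Ω → E} (_ : HasPDF Z P μ) :
    AEMeasurable (surprisal μ P Z) P :=
  ((measurable_pdf Z P μ).comp_aemeasurable (HasPDF.aemeasurable Z P μ)).ennreal_toReal.log.neg

lemma dent_eq_integral_surprisal {Z : Ω → E} (hZ : AEMeasurable Z P) :
    dent μ P Z = ∫ ω, surprisal μ P Z ω ∂P := by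
  rw [dent, integral_map hZ
    (Measure.measurable_rnDeriv _ _).ennreal_toReal.log.aestronglyMeasurable, ← integral_neg]
  rfl

lemma FiniteDent.hasPDF_s15 [SFinite P] [SigmaFinite μ] {Z : Ω → E} (h : FiniteDent μ P Z)
    (hZ : AEMeasurable Z P) : HasPDF Z P μ :=
  ⟨hZ, inferInstance, h.1⟩

lemma FiniteDent.integrable_surprisal {Z : Ω → E} (h : FiniteDent μ P Z)
    (hZ : AEMeasurable Z P) : Integrable (surprisal μ P Z) P :=
  (h.2.comp_aemeasurable hZ).neg

lemma dent_congr {Z Z' : Ω → E} (h : P.map Z = P.map Z') : dent μ P Z = dent μ P Z' := by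
  rw [dent, dent, h]

lemma FiniteDent.congr {Z Z' : Ω → E} (hZ : FiniteDent μ P Z) (h : P.map Z = P.map Z') :
    FiniteDent μ P Z' := by
  rwa [FiniteDent, ← h]

lemma ofReal_exp_neg_surprisal [IsFiniteMeasure P] {Z : Ω → E} (hZ : HasPDF Z P μ) :
    ∀ᵐ ω ∂P, ENNReal.ofReal (Real.exp (-surprisal μ P Z ω)) = pdf Z P μ (Z ω) := by
  have hlt : ∀ᵐ x ∂μ, pdf Z P μ x < ∞ := pdf.ae_lt_top
  filter_upwards [ae_pdf_comp_ne_zero (Z := Z) (μ := μ), ae_comp_of_hasPDF (Z := Z) hlt]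
    with ω h0 htop
  rw [surprisal, neg_neg, Real.exp_log (ENNReal.toReal_pos h0 htop.ne),
    ENNReal.ofReal_toReal htop.ne]

lemma lintegral_comp_mul_exp_surprisal_le [IsFiniteMeasure P] {Z : Ω → E} (hZ : HasPDF Z P μ)
    {q : E → ℝ≥0∞} (hq : Measurable q) :
    ∫⁻ ω, q (Z ω) * ENNReal.ofReal (Real.exp (surprisal μ P Z ω)) ∂P ≤ ∫⁻ x, q x ∂μ :=
  calc
    _ = ∫⁻ ω, q (Z ω) / pdf Z P μ (Z ω) ∂P := by
      refine lintegral_congr_ae ?_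
      filter_upwards [ofReal_exp_neg_surprisal hZ] with ω hω
      rw [← hω, Real.exp_neg, ENNReal.ofReal_inv_of_pos (Real.exp_pos _), div_eq_mul_inv,
        inv_inv]
    _ = ∫⁻ x, pdf Z P μ x * (q x / pdf Z P μ x) ∂μ :=
      (pdf.lintegral_pdf_mul (X := Z) (μ := μ) (f := fun x => q x / pdf Z P μ x)
        (by fun_prop)).symm
    _ ≤ ∫⁻ x, q x ∂μ := lintegral_mono fun x => ENNReal.mul_div_le

lemma surprisal_comp_ae_eq [IsFiniteMeasure P] [SigmaFinite μ] {Z : Ω → E} (hZ : HasPDF Z P μ)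
    {Φ : E → F} (hΦ : MeasurePreserving Φ μ ν) (hemb : MeasurableEmbedding Φ) :
    surprisal ν P (Φ ∘ Z) =ᵐ[P] surprisal μ P Z := by
  filter_upwards [ae_comp_of_hasPDF (Z := Z) (hemb.rnDeriv_map (P.map Z) μ)] with ω hω
  rw [AEMeasurable.map_map_of_aemeasurable hΦ.measurable.aemeasurable
    (HasPDF.aemeasurable Z P μ), hΦ.map_eq] at hω
  rw [surprisal, surprisal, pdf_def, pdf_def, Function.comp_apply, hω]

lemma surprisal_swap_ae_eq [IsFiniteMeasure P] [SigmaFinite μ] [SigmaFinite ν] {U : Ω → E}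
    {V : Ω → F} (h : HasPDF (fun ω => (U ω, V ω)) P (μ.prod ν)) :
    surprisal (ν.prod μ) P (fun ω => (V ω, U ω)) =ᵐ[P]
      surprisal (μ.prod ν) P fun ω => (U ω, V ω) :=
  surprisal_comp_ae_eq h Measure.measurePreserving_swap
    MeasurableEquiv.prodComm.measurableEmbedding

/-- Subadditivity `h(Z) ≤ h(U) + h(V)` when `(U, V)` is a measure-preserving image of `Z`. -/
lemma isLogEVariable_surprisal_sub_sub [IsProbabilityMeasure P] [SigmaFinite ν]
    [SigmaFinite ξ] {Z : Ω → E} (hZ : HasPDF Z P μ) {U : Ω → F} {V : Ω → F'} {Φ : E → F × F'}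
    (hΦ : MeasurePreserving Φ μ (ν.prod ξ)) (h : ∀ ω, Φ (Z ω) = (U ω, V ω)) :
    IsLogEVariable (fun ω => surprisal μ P Z ω - surprisal ν P U ω - surprisal ξ P V ω) P := by
  have hUV : HasPDF (fun ω => (U ω, V ω)) P (ν.prod ξ) := by
    simpa only [Function.comp_def, h] using
      pdf.quasiMeasurePreserving_hasPDF' Z hΦ.quasiMeasurePreserving
  refine ⟨((aemeasurable_surprisal hZ).sub (aemeasurable_surprisal (hasPDF_fst hUV))).sub
    (aemeasurable_surprisal (hasPDF_snd hUV)), ?_⟩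
  calc
    _ = ∫⁻ ω, pdf U P ν (Φ (Z ω)).1 * pdf V P ξ (Φ (Z ω)).2 *
          ENNReal.ofReal (Real.exp (surprisal μ P Z ω)) ∂P := by
      refine lintegral_congr_ae ?_
      filter_upwards [ofReal_exp_neg_surprisal (hasPDF_fst hUV),
        ofReal_exp_neg_surprisal (hasPDF_snd hUV)] with ω hU hV
      rw [h, ← hU, ← hV, ← ENNReal.ofReal_mul (Real.exp_pos _).le,
        ← ENNReal.ofReal_mul (by positivity), ← Real.exp_add, ← Real.exp_add]
      ring_nf
    _ ≤ ∫⁻ x, pdf U P ν (Φ x).1 * pdf V P ξ (Φ x).2 ∂μ :=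
      lintegral_comp_mul_exp_surprisal_le hZ
        (q := fun x => pdf U P ν (Φ x).1 * pdf V P ξ (Φ x).2)
        (by have := hΦ.measurable; fun_prop)
    _ = (∫⁻ u, pdf U P ν u ∂ν) * ∫⁻ v, pdf V P ξ v ∂ξ := by
      rw [hΦ.lintegral_comp (f := fun z => pdf U P ν z.1 * pdf V P ξ z.2) (by fun_prop),
        lintegral_prod_mul (by fun_prop) (by fun_prop)]
    _ ≤ 1 := mul_le_one' (lintegral_pdf_le_one U) (lintegral_pdf_le_one V)

/-- Submodularity `h(U, V, W) + h(U) ≤ h(U, V) + h(U, W)`. -/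
lemma isLogEVariable_surprisal_submodular [IsProbabilityMeasure P] [SigmaFinite μ]
    [SigmaFinite ν] [SigmaFinite ξ] {U : Ω → E} {V : Ω → F} {W : Ω → F'}
    (hUVW : HasPDF (fun ω => (U ω, V ω, W ω)) P (μ.prod (ν.prod ξ))) :
    IsLogEVariable (fun ω =>
      surprisal (μ.prod (ν.prod ξ)) P (fun ω => (U ω, V ω, W ω)) ω + surprisal μ P U ω
        - surprisal (μ.prod ν) P (fun ω => (U ω, V ω)) ω
        - surprisal (μ.prod ξ) P (fun ω => (U ω, W ω)) ω) P := by
  have hUV := hasPDF_prodMk_fst hUVW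
  have hUW := hasPDF_prodMk_snd hUVW
  refine ⟨(((aemeasurable_surprisal hUVW).add (aemeasurable_surprisal (hasPDF_fst hUV))).sub
    (aemeasurable_surprisal hUV)).sub (aemeasurable_surprisal hUW), ?_⟩
  set pUV := pdf (fun ω => (U ω, V ω)) P (μ.prod ν) with hpUV
  set pUW := pdf (fun ω => (U ω, W ω)) P (μ.prod ξ) with hpUW
  have mUV : Measurable pUV := measurable_pdf _ _ _
  have mUW : Measurable pUW := measurable_pdf _ _ _
  calc
    _ = ∫⁻ ω, pUV (U ω, V ω) * pUW (U ω, W ω) * (pdf U P μ (U ω))⁻¹ *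
          ENNReal.ofReal (Real.exp
            (surprisal (μ.prod (ν.prod ξ)) P (fun ω => (U ω, V ω, W ω)) ω)) ∂P := by
      refine lintegral_congr_ae ?_
      filter_upwards [ofReal_exp_neg_surprisal (hasPDF_fst hUV), ofReal_exp_neg_surprisal hUV,
        ofReal_exp_neg_surprisal hUW] with ω eU eUV eUW
      rw [← eU, hpUV, ← eUV, hpUW, ← eUW, ← ENNReal.ofReal_inv_of_pos (Real.exp_pos _),
        ← Real.exp_neg, ← ENNReal.ofReal_mul (by positivity), ← ENNReal.ofReal_mul (by positivity),
        ← ENNReal.ofReal_mul (by positivity), ← Real.exp_add, ← Real.exp_add, ← Real.exp_add]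
      ring_nf
    _ ≤ ∫⁻ z, pUV (z.1, z.2.1) * pUW (z.1, z.2.2) * (pdf U P μ z.1)⁻¹ ∂(μ.prod (ν.prod ξ)) :=
      lintegral_comp_mul_exp_surprisal_le hUVW
        (q := fun z => pUV (z.1, z.2.1) * pUW (z.1, z.2.2) * (pdf U P μ z.1)⁻¹) (by fun_prop)
    _ = ∫⁻ u, (∫⁻ v, pUV (u, v) ∂ν) * (∫⁻ w, pUW (u, w) ∂ξ) * (pdf U P μ u)⁻¹ ∂μ := by
      rw [lintegral_prod _ (by fun_prop)]
      refine lintegral_congr fun u => ?_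
      dsimp only
      rw [lintegral_mul_const _ (by fun_prop), lintegral_prod_mul (f := fun v => pUV (u, v))
        (g := fun w => pUW (u, w)) (by fun_prop) (by fun_prop)]
    _ = ∫⁻ u, pdf U P μ u * (pdf U P μ u * (pdf U P μ u)⁻¹) ∂μ := by
      refine lintegral_congr_ae ?_
      filter_upwards [lintegral_pdf_prodMk_ae_eq hUV, lintegral_pdf_prodMk_ae_eq hUW] with u hV hW
      rw [hV, hW, mul_assoc]
    _ ≤ ∫⁻ u, pdf U P μ u ∂μ :=
      lintegral_mono fun u => mul_le_of_le_one_right' (ENNReal.mul_inv_le_one _)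
    _ ≤ 1 := lintegral_pdf_le_one U

end Surprisal

section CondIndep

variable {Ω E F F' : Type*} [MeasurableSpace Ω] [MeasurableSpace E] [MeasurableSpace F]
  [MeasurableSpace F'] {P : Measure Ω} {μ : Measure E} {ν : Measure F} {ξ : Measure F'}

/-- The conditional density of `U` given `V`. The normalising factor is the integral of the joint
density rather than `pdf V P μ`, to which it is only almost everywhere equal: this makes the total
mass at most `1` for every value of `V`. -/
noncomputable def condPDF (μ : Measure E) (ν : Measure F) (P : Measure Ω) (V : Ω → E) (U : Ω → F)
    (v : E) (u : F) : ℝ≥0∞ :=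
  pdf (fun ω => (V ω, U ω)) P (μ.prod ν) (v, u) /
    ∫⁻ w, pdf (fun ω => (V ω, U ω)) P (μ.prod ν) (v, w) ∂ν

@[fun_prop]
lemma measurable_condPDF [SFinite ν] (V : Ω → E) (U : Ω → F) :
    Measurable (Function.uncurry (condPDF μ ν P V U)) := by
  have := (measurable_pdf (fun ω => (V ω, U ω)) P (μ.prod ν)).lintegral_prod_right' (ν := ν)
  unfold condPDF Function.uncurry
  fun_prop

lemma lintegral_condPDF_le_one (V : Ω → E) (U : Ω → F) (v : E) :
    ∫⁻ u, condPDF μ ν P V U v u ∂ν ≤ 1 := by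
  simp only [condPDF, div_eq_mul_inv]
  rw [lintegral_mul_const _ (by fun_prop)]
  exact ENNReal.mul_inv_le_one _

lemma pdf_mul_condPDF_ae_eq [IsFiniteMeasure P] [SigmaFinite μ] [SigmaFinite ν] {V : Ω → E}
    {U : Ω → F} (h : HasPDF (fun ω => (V ω, U ω)) P (μ.prod ν)) :
    (fun z => pdf V P μ z.1 * condPDF μ ν P V U z.1 z.2) =ᵐ[μ.prod ν]
      pdf (fun ω => (V ω, U ω)) P (μ.prod ν) := by
  have hfin : ∀ᵐ v ∂μ, pdf V P μ v < ∞ := pdf.ae_lt_top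
  have hmul : Measurable fun z : E × F => pdf V P μ z.1 * condPDF μ ν P V U z.1 z.2 := by fun_prop
  refine (Measure.ae_prod_iff_ae_ae (measurableSet_eq_fun hmul (measurable_pdf _ _ _))).2 ?_
  filter_upwards [lintegral_pdf_prodMk_ae_eq h, hfin] with v hv hlt
  have hnull : pdf V P μ v = 0 →
      ∀ᵐ u ∂ν, pdf (fun ω => (V ω, U ω)) P (μ.prod ν) (v, u) = 0 := fun h0 =>
    (lintegral_eq_zero_iff (by fun_prop)).1 (hv.trans h0)
  filter_upwards [Filter.eventually_imp_distrib_left.2 hnull] with u hu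
  rw [condPDF, hv]
  exact ENNReal.mul_div_cancel' hu fun htop => absurd htop hlt.ne

instance isFiniteKernel_condPDF [SFinite ν] (V : Ω → E) (U : Ω → F) :
    IsFiniteKernel ((Kernel.const E ν).withDensity (condPDF μ ν P V U)) := by
  refine ⟨1, ENNReal.one_lt_top, fun v => ?_⟩
  rw [Kernel.withDensity_apply' _ (measurable_condPDF V U), Kernel.const_apply, setLIntegral_univ]
  exact lintegral_condPDF_le_one V U v

lemma withDensity_compProd_withDensity_const [SigmaFinite μ] [SFinite ν] {p : E → ℝ≥0∞}
    (hp : Measurable p) {ρ : E → F → ℝ≥0∞} (hρ : Measurable (Function.uncurry ρ))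
    [IsSFiniteKernel ((Kernel.const E ν).withDensity ρ)] :
    μ.withDensity p ⊗ₘ (Kernel.const E ν).withDensity ρ =
      (μ.prod ν).withDensity fun z => p z.1 * ρ z.1 z.2 := by
  rw [Measure.compProd_withDensity hρ, Measure.compProd_const, prod_withDensity_left hp]
  exact (withDensity_mul _ (hp.comp measurable_fst) hρ).symm

lemma condDistrib_ae_eq_condPDF [IsFiniteMeasure P] [StandardBorelSpace F] [Nonempty F]
    [SigmaFinite μ] [SigmaFinite ν] {V : Ω → E} {U : Ω → F}
    (h : HasPDF (fun ω => (V ω, U ω)) P (μ.prod ν)) :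
    condDistrib U V P =ᵐ[P.map V] (Kernel.const E ν).withDensity (condPDF μ ν P V U) := by
  have hV := hasPDF_fst h
  have hU := hasPDF_snd h
  refine condDistrib_ae_eq_of_measure_eq_compProd V (HasPDF.aemeasurable U P ν) ?_
  rw [map_eq_withDensity_pdf V P μ, withDensity_compProd_withDensity_const (measurable_pdf V P μ)
    (measurable_condPDF V U), map_eq_withDensity_pdf _ P (μ.prod ν)]
  exact (withDensity_congr_ae (pdf_mul_condPDF_ae_eq h)).symm

lemma withDensity_const_prod_withDensity_const [SFinite ν] [SFinite ξ]
    {ρ₁ : E → F → ℝ≥0∞} (hρ₁ : Measurable (Function.uncurry ρ₁))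
    {ρ₂ : E → F' → ℝ≥0∞} (hρ₂ : Measurable (Function.uncurry ρ₂))
    [IsSFiniteKernel ((Kernel.const E ν).withDensity ρ₁)]
    [IsSFiniteKernel ((Kernel.const E ξ).withDensity ρ₂)] :
    (Kernel.const E ν).withDensity ρ₁ ×ₖ (Kernel.const E ξ).withDensity ρ₂ =
      (Kernel.const E (ν.prod ξ)).withDensity fun v w => ρ₁ v w.1 * ρ₂ v w.2 := by
  ext1 v
  rw [Kernel.prod_apply, Kernel.withDensity_apply _ hρ₁, Kernel.withDensity_apply _ hρ₂,
    Kernel.withDensity_apply _ (by fun_prop), Kernel.const_apply, Kernel.const_apply,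
    Kernel.const_apply, prod_withDensity hρ₁.of_uncurry_left hρ₂.of_uncurry_left]

variable [StandardBorelSpace Ω] [StandardBorelSpace F] [Nonempty F] [StandardBorelSpace F']
  [Nonempty F'] [IsFiniteMeasure P] [SigmaFinite μ] [SigmaFinite ν] [SigmaFinite ξ]
  {V : Ω → E} {U : Ω → F} {W : Ω → F'}

lemma map_eq_withDensity_of_condIndepFun (hV : Measurable V) (hU : Measurable U)
    (hW : Measurable W) (hVU : HasPDF (fun ω => (V ω, U ω)) P (μ.prod ν))
    (hVW : HasPDF (fun ω => (V ω, W ω)) P (μ.prod ξ))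
    (hci : CondIndepFun (MeasurableSpace.comap V inferInstance) hV.comap_le U W P) :
    P.map (fun ω => (V ω, U ω, W ω)) = (μ.prod (ν.prod ξ)).withDensity fun z =>
      pdf V P μ z.1 * (condPDF μ ν P V U z.1 z.2.1 * condPDF μ ξ P V W z.1 z.2.2) := by
  have hpV := hasPDF_fst hVU
  have hprod := withDensity_const_prod_withDensity_const (ν := ν) (ξ := ξ)
    (measurable_condPDF (P := P) (μ := μ) (ν := ν) V U)
    (measurable_condPDF (P := P) (μ := μ) (ν := ξ) V W)
  have hfin : IsFiniteKernel ((Kernel.const E (ν.prod ξ)).withDensity fun v w =>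
      condPDF μ ν P V U v w.1 * condPDF μ ξ P V W v w.2) := hprod ▸ inferInstance
  have hcond : condDistrib U V P ×ₖ condDistrib W V P =ᵐ[P.map V]
      (Kernel.const E (ν.prod ξ)).withDensity fun v w =>
        condPDF μ ν P V U v w.1 * condPDF μ ξ P V W v w.2 := by
    filter_upwards [condDistrib_ae_eq_condPDF hVU, condDistrib_ae_eq_condPDF hVW] with v hv hv'
    rw [← hprod, Kernel.prod_apply, Kernel.prod_apply, hv, hv']
  rw [(condIndepFun_iff_map_prod_eq_prod_condDistrib_prod_condDistrib hU hW hV).1 hci,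
    ← Measure.compProd_eq_comp_prod, Measure.compProd_congr hcond,
    map_eq_withDensity_pdf V P μ,
    withDensity_compProd_withDensity_const (measurable_pdf V P μ) (by fun_prop)]

lemma hasPDF_of_condIndepFun (hV : Measurable V) (hU : Measurable U)
    (hW : Measurable W) (hVU : HasPDF (fun ω => (V ω, U ω)) P (μ.prod ν))
    (hVW : HasPDF (fun ω => (V ω, W ω)) P (μ.prod ξ))
    (hci : CondIndepFun (MeasurableSpace.comap V inferInstance) hV.comap_le U W P) :
    HasPDF (fun ω => (V ω, U ω, W ω)) P (μ.prod (ν.prod ξ)) := by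
  refine hasPDF_of_map_eq_withDensity (by fun_prop) _ (Measurable.aemeasurable ?_)
    (map_eq_withDensity_of_condIndepFun hV hU hW hVU hVW hci)
  fun_prop

lemma surprisal_add_surprisal_of_condIndepFun (hV : Measurable V) (hU : Measurable U)
    (hW : Measurable W) (hVU : HasPDF (fun ω => (V ω, U ω)) P (μ.prod ν))
    (hVW : HasPDF (fun ω => (V ω, W ω)) P (μ.prod ξ))
    (hci : CondIndepFun (MeasurableSpace.comap V inferInstance) hV.comap_le U W P) :
    ∀ᵐ ω ∂P, surprisal (μ.prod (ν.prod ξ)) P (fun ω => (V ω, U ω, W ω)) ω + surprisal μ P V ω =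
      surprisal (μ.prod ν) P (fun ω => (V ω, U ω)) ω +
        surprisal (μ.prod ξ) P (fun ω => (V ω, W ω)) ω := by
  have hVUW := hasPDF_of_condIndepFun hV hU hW hVU hVW hci
  have hpdf := (pdf.eq_of_map_eq_withDensity _ (Measurable.aemeasurable (by fun_prop))).1
    (map_eq_withDensity_of_condIndepFun hV hU hW hVU hVW hci)
  filter_upwards [ae_comp_of_hasPDF (Z := fun ω => (V ω, U ω, W ω)) hpdf,
    ae_comp_of_hasPDF (Z := fun ω => (V ω, U ω)) (pdf_mul_condPDF_ae_eq hVU),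
    ae_comp_of_hasPDF (Z := fun ω => (V ω, W ω)) (pdf_mul_condPDF_ae_eq hVW),
    ofReal_exp_neg_surprisal hVUW, ofReal_exp_neg_surprisal (hasPDF_fst hVU),
    ofReal_exp_neg_surprisal hVU, ofReal_exp_neg_surprisal hVW]
    with ω hT hVU' hVW' eT eV eVU eVW
  have hmul : pdf (fun ω => (V ω, U ω, W ω)) P (μ.prod (ν.prod ξ)) (V ω, U ω, W ω) *
      pdf V P μ (V ω) = pdf (fun ω => (V ω, U ω)) P (μ.prod ν) (V ω, U ω) *
        pdf (fun ω => (V ω, W ω)) P (μ.prod ξ) (V ω, W ω) := by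
    rw [hT, ← hVU', ← hVW']
    ring
  rw [← eT, ← eV, ← eVU, ← eVW, ← ENNReal.ofReal_mul (Real.exp_pos _).le,
    ← ENNReal.ofReal_mul (Real.exp_pos _).le, ← Real.exp_add, ← Real.exp_add,
    ENNReal.ofReal_eq_ofReal_iff (Real.exp_pos _).le (Real.exp_pos _).le, Real.exp_eq_exp] at hmul
  linarith

end CondIndep

section Group

variable {Ω G : Type*} [MeasurableSpace Ω] [AddCommGroup G] [MeasurableSpace G] [MeasurableAdd₂ G]
  [MeasurableNeg G] {P : Measure Ω} {μ : Measure G}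

lemma measurePreserving_sub_prod_add [SFinite μ] [μ.IsAddLeftInvariant] :
    MeasurePreserving (fun z : G × G × G => (z.2.1 - z.2.2, z.2.2, z.2.2 + z.1))
      (μ.prod (μ.prod μ)) (μ.prod (μ.prod μ)) :=
  ((MeasurePreserving.id μ).prod (measurePreserving_prod_add μ μ)).comp
    ((measurePreserving_prodAssoc μ μ μ).comp
      (((measurePreserving_sub_prod μ μ).prod (MeasurePreserving.id μ)).comp
        Measure.measurePreserving_swap))

lemma measurableEmbedding_sub_prod_add [StandardBorelSpace G] :
    MeasurableEmbedding fun z : G × G × G => (z.2.1 - z.2.2, z.2.2, z.2.2 + z.1) := by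
  refine Measurable.measurableEmbedding (by fun_prop) ?_
  rintro ⟨y, x₁, x₂⟩ ⟨y', x₁', x₂'⟩ h
  simp only [Prod.mk.injEq] at h ⊢
  obtain ⟨hd, rfl, hs⟩ := h
  exact ⟨add_left_cancel hs, sub_left_injective hd, rfl⟩

variable [StandardBorelSpace Ω] [StandardBorelSpace G] [IsProbabilityMeasure P] [SigmaFinite μ]
  [μ.IsAddLeftInvariant] {X₁ X₂ Y : Ω → G}

lemma hasPDF_sub_prodMk_add (hX₁ : Measurable X₁) (hX₂ : Measurable X₂) (hY : Measurable Y)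
    (hX₁Y : HasPDF (fun ω => (X₁ ω, Y ω)) P (μ.prod μ))
    (hX₂Y : HasPDF (fun ω => (X₂ ω, Y ω)) P (μ.prod μ))
    (hci : CondIndepFun (MeasurableSpace.comap Y inferInstance) hY.comap_le X₁ X₂ P) :
    HasPDF (fun ω => ((X₁ - X₂) ω, X₂ ω, (X₂ + Y) ω)) P (μ.prod (μ.prod μ)) :=
  have := hasPDF_of_condIndepFun hY hX₁ hX₂ (hasPDF_swap hX₁Y) (hasPDF_swap hX₂Y) hci
  pdf.quasiMeasurePreserving_hasPDF' (μ := μ.prod (μ.prod μ)) (fun ω => (Y ω, X₁ ω, X₂ ω))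
    measurePreserving_sub_prod_add.quasiMeasurePreserving

lemma surprisal_sub_prodMk_add_ae_eq (hX₁ : Measurable X₁) (hX₂ : Measurable X₂) (hY : Measurable Y)
    (hX₁Y : HasPDF (fun ω => (X₁ ω, Y ω)) P (μ.prod μ))
    (hX₂Y : HasPDF (fun ω => (X₂ ω, Y ω)) P (μ.prod μ))
    (hci : CondIndepFun (MeasurableSpace.comap Y inferInstance) hY.comap_le X₁ X₂ P) :
    ∀ᵐ ω ∂P, surprisal (μ.prod (μ.prod μ)) P (fun ω => ((X₁ - X₂) ω, X₂ ω, (X₂ + Y) ω)) ω +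
        surprisal μ P Y ω =
      surprisal (μ.prod μ) P (fun ω => (X₁ ω, Y ω)) ω +
        surprisal (μ.prod μ) P (fun ω => (X₂ ω, Y ω)) ω := by
  have hYX₁ := hasPDF_swap hX₁Y
  have hYX₂ := hasPDF_swap hX₂Y
  filter_upwards [surprisal_swap_ae_eq hX₁Y, surprisal_swap_ae_eq hX₂Y,
    surprisal_add_surprisal_of_condIndepFun hY hX₁ hX₂ hYX₁ hYX₂ hci,
    surprisal_comp_ae_eq (hasPDF_of_condIndepFun hY hX₁ hX₂ hYX₁ hYX₂ hci)
      measurePreserving_sub_prod_add measurableEmbedding_sub_prod_add] with ω h₁ h₂ hadd hcomp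
  rw [← h₁, ← h₂, ← hadd]
  exact congrArg (· + _) hcomp

lemma isLogEVariable_surprisal_sub_prodMk_add (hX₁ : Measurable X₁) (hX₂ : Measurable X₂)
    (hY : Measurable Y) (hX₁Y : HasPDF (fun ω => (X₁ ω, Y ω)) P (μ.prod μ))
    (hX₂Y : HasPDF (fun ω => (X₂ ω, Y ω)) P (μ.prod μ))
    (hDY : HasPDF (fun ω => ((X₁ - X₂) ω, Y ω)) P (μ.prod μ))
    (hci : CondIndepFun (MeasurableSpace.comap Y inferInstance) hY.comap_le X₁ X₂ P) :
    IsLogEVariable (fun ω =>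
      (surprisal (μ.prod μ) P (fun ω => ((X₁ - X₂) ω, Y ω)) ω
          + surprisal (μ.prod μ) P (fun ω => (X₁ ω, Y ω)) ω
          + surprisal (μ.prod μ) P (fun ω => (X₂ ω, Y ω)) ω
        - (surprisal μ P X₁ ω + surprisal μ P X₂ ω + surprisal μ P (X₁ + Y) ω
          + surprisal μ P (X₂ + Y) ω + 2 * surprisal μ P Y ω)) / 4) P := by
  have hT := hasPDF_sub_prodMk_add hX₁ hX₂ hY hX₁Y hX₂Y hci
  have h_diff_Y := isLogEVariable_surprisal_sub_sub hDY (.id _) fun ω => rfl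
  have h_diff_X₂ := isLogEVariable_surprisal_sub_sub (hasPDF_prodMk_fst hT)
    (measurePreserving_add_prod μ μ) (U := X₁) (V := X₂) fun ω => by simp
  have h_diff_sum := isLogEVariable_surprisal_sub_sub (hasPDF_prodMk_snd hT)
    (measurePreserving_add_prod μ μ) (U := X₁ + Y) (V := X₂ + Y) fun ω => by simp [← add_assoc]
  have h_submod := isLogEVariable_surprisal_submodular hT
  refine ((h_diff_Y.add_div_two h_diff_X₂).add_div_two (h_diff_sum.add_div_two h_submod)).congr ?_
  filter_upwards [surprisal_sub_prodMk_add_ae_eq hX₁ hX₂ hY hX₁Y hX₂Y hci] with ω hω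
  linarith

theorem dent_sub_prodMk_add_le (hX₁ : Measurable X₁) (hX₂ : Measurable X₂) (hY : Measurable Y)
    (hfX₁ : FiniteDent μ P X₁) (hfX₂ : FiniteDent μ P X₂) (hfY : FiniteDent μ P Y)
    (hfX₁Y : FiniteDent (μ.prod μ) P (fun ω => (X₁ ω, Y ω)))
    (hfX₂Y : FiniteDent (μ.prod μ) P (fun ω => (X₂ ω, Y ω)))
    (hfS₁ : FiniteDent μ P (X₁ + Y)) (hfS₂ : FiniteDent μ P (X₂ + Y))
    (hfDY : FiniteDent (μ.prod μ) P (fun ω => ((X₁ - X₂) ω, Y ω)))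
    (hci : CondIndepFun (MeasurableSpace.comap Y inferInstance) hY.comap_le X₁ X₂ P) :
    dent (μ.prod μ) P (fun ω => ((X₁ - X₂) ω, Y ω)) +
        dent (μ.prod μ) P (fun ω => (X₁ ω, Y ω)) + dent (μ.prod μ) P (fun ω => (X₂ ω, Y ω)) ≤
      dent μ P X₁ + dent μ P X₂ + dent μ P (X₁ + Y) + dent μ P (X₂ + Y) + 2 * dent μ P Y := by
  have hE := isLogEVariable_surprisal_sub_prodMk_add hX₁ hX₂ hY (hfX₁Y.hasPDF_s15 (by fun_prop))
    (hfX₂Y.hasPDF_s15 (by fun_prop)) (hfDY.hasPDF_s15 (by fun_prop)) hci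
  have iDY := hfDY.integrable_surprisal (by fun_prop)
  have iX₁Y := hfX₁Y.integrable_surprisal (by fun_prop)
  have iX₂Y := hfX₂Y.integrable_surprisal (by fun_prop)
  have iX₁ := hfX₁.integrable_surprisal (by fun_prop)
  have iX₂ := hfX₂.integrable_surprisal (by fun_prop)
  have iS₁ := hfS₁.integrable_surprisal (by fun_prop)
  have iS₂ := hfS₂.integrable_surprisal (by fun_prop)
  have iY := hfY.integrable_surprisal (by fun_prop)
  have hneg := hE.integral_nonpos (by fun_prop)
  rw [integral_div, integral_sub (by fun_prop) (by fun_prop)] at hneg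
  iterate 6 rw [integral_add (by fun_prop) (by fun_prop)] at hneg
  rw [integral_const_mul] at hneg
  iterate 8 rw [dent_eq_integral_surprisal (by fun_prop)]
  linarith

end Group

theorem weak_balog_szemeredi_gowers_general
    {Ω G : Type*} [MeasurableSpace Ω] [StandardBorelSpace Ω]
    (P : Measure Ω) [IsProbabilityMeasure P]
    [AddCommGroup G] [MeasureSpace G] [StandardBorelSpace G] [MeasurableAdd₂ G] [MeasurableNeg G]
    [SigmaFinite (volume : Measure G)] [(volume : Measure G).IsAddLeftInvariant]
    (X Y X₁ X₂ : Ω → G) (hY : Measurable Y) (hX₁ : Measurable X₁) (hX₂ : Measurable X₂) (a b : ℝ)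
    (hfX : FiniteDent volume P X) (hfY : FiniteDent volume P Y)
    (hfXY : FiniteDent volume P (fun ω => (X ω, Y ω)))
    (hfsum : FiniteDent volume P (X + Y))
    (hfdiff : FiniteDent volume P (fun ω => (X₁ ω - X₂ ω, Y ω)))
    (hdep : dent volume P (fun ω => (X ω, Y ω)) ≥ dent volume P X + dent volume P Y - a)
    (hsum : dent volume P (X + Y) ≤
      (1 / 2) * dent volume P X + (1 / 2) * dent volume P Y + b)
    (hid₁ : IdentDistrib (fun ω => (X₁ ω, Y ω)) (fun ω => (X ω, Y ω)) P P)
    (hid₂ : IdentDistrib (fun ω => (X₂ ω, Y ω)) (fun ω => (X ω, Y ω)) P P)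
    (hci : CondIndepFun (MeasurableSpace.comap Y inferInstance) hY.comap_le X₁ X₂ P) :
    condDent P (X₁ - X₂) Y ≤ dent volume P X + 2 * a + 2 * b := by
  have hX₁_map : P.map X = P.map X₁ := (hid₁.comp measurable_fst).map_eq.symm
  have hX₂_map : P.map X = P.map X₂ := (hid₂.comp measurable_fst).map_eq.symm
  have hS₁_map : P.map (X + Y) = P.map (X₁ + Y) := (hid₁.comp measurable_add).map_eq.symm
  have hS₂_map : P.map (X + Y) = P.map (X₂ + Y) := (hid₂.comp measurable_add).map_eq.symm
  have hle := dent_sub_prodMk_add_le hX₁ hX₂ hY (hfX.congr hX₁_map) (hfX.congr hX₂_map) hfY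
    (hfXY.congr hid₁.map_eq.symm) (hfXY.congr hid₂.map_eq.symm) (hfsum.congr hS₁_map)
    (hfsum.congr hS₂_map) hfdiff hci
  rw [← dent_congr hX₁_map, ← dent_congr hX₂_map, ← dent_congr hS₁_map, ← dent_congr hS₂_map,
    dent_congr hid₁.map_eq, dent_congr hid₂.map_eq] at hle
  change dent volume P (fun ω => ((X₁ - X₂) ω, Y ω)) - dent volume P Y ≤ _
  change dent volume P _ + dent volume P _ + dent volume P _ ≤ _ at hle
  linarith

/-- **Weak Balog-Szemerédi-Gowers lemma for differential entropy.**
Suppose `X, Y` are continuous random variables with `h(X,Y) ≥ h(X) + h(Y) - log K` and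
`h(X+Y) ≤ ½h(X) + ½h(Y) + log K` for some `K ≥ 1`.  If `X₁, X₂` are conditionally
independent versions of `X` given `Y`, then `h(X₁ - X₂ | Y) ≤ h(X) + 4 log K`. -/
theorem weak_balog_szemeredi_gowers
    {Ω : Type*} [MeasurableSpace Ω] [StandardBorelSpace Ω]
    (P : Measure Ω) [IsProbabilityMeasure P]
    (X Y X₁ X₂ : Ω → ℝ)
    (hX : Measurable X) (hY : Measurable Y) (hX₁ : Measurable X₁) (hX₂ : Measurable X₂)
    (K : ℝ) (hK : 1 ≤ K)
    (hfX : FiniteDent volume P X) (hfY : FiniteDent volume P Y)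
    (hfXY : FiniteDent volume P (fun ω => (X ω, Y ω)))
    (hfsum : FiniteDent volume P (X + Y))
    (hfdiff : FiniteDent volume P (fun ω => (X₁ ω - X₂ ω, Y ω)))
    (hdep : dent volume P (fun ω => (X ω, Y ω)) ≥
      dent volume P X + dent volume P Y - Real.log K)
    (hsum : dent volume P (X + Y) ≤
      (1 / 2) * dent volume P X + (1 / 2) * dent volume P Y + Real.log K)
    (hid₁ : IdentDistrib (fun ω => (X₁ ω, Y ω)) (fun ω => (X ω, Y ω)) P P)
    (hid₂ : IdentDistrib (fun ω => (X₂ ω, Y ω)) (fun ω => (X ω, Y ω)) P P)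
    (hci : CondIndepFun (MeasurableSpace.comap Y inferInstance) hY.comap_le X₁ X₂ P) :
    condDent P (X₁ - X₂) Y ≤ dent volume P X + 4 * Real.log K := by
  have h := weak_balog_szemeredi_gowers_general P X Y X₁ X₂ hY hX₁ hX₂ (Real.log K) (Real.log K)
    hfX hfY hfXY hfsum hfdiff hdep hsum hid₁ hid₂ hci
  linarith
end
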